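/- Let k be a field and A a k-biring whose only idempotent elements are 0 and 1 (so that Spec A is a connected affine ring scheme over k, not necessarily of finite type). Then the additive group scheme of Spec A is unipotent: for every Hopf ideal I of A with I ≠ ker ε⁺, there exists x ∈ A with x ∉ I and Δ⁺(x) − x ⊗ 1 − 1 ⊗ x ∈ I ⊗ A + A ⊗ I. (Corollary 2.9 of the paper: any affine connected ring scheme over a field is unipotent.) -/

import Mathlib

/- A `k`-biring: a commutative `k`-algebra `A` with coaddition, additive counit, antipode,
comultiplication and multiplicative counit, such that for every commutative `k`-algebra `R`
the induced operations make `Hom_{k-alg}(A, R)` a commutative unital ring (equivalently, the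
diagrammatic coring/codistributivity axioms hold). -/

open scoped TensorProduct

/-- The binary operation on `k`-algebra homomorphisms `A →ₐ[k] R` induced by a
comultiplication-type map `Δ : A →ₐ[k] A ⊗[k] A`: `(f, g) ↦ mult ∘ (f ⊗ g) ∘ Δ`. -/
noncomputable def ptOp (k A : Type) [Field k] [CommRing A] [Algebra k A]
    (Δ : A →ₐ[k] A ⊗[k] A) {R : Type} [CommRing R] [Algebra k R]
    (f g : A →ₐ[k] R) : A →ₐ[k] R :=
  (Algebra.TensorProduct.lmul' k (S := R)).comp ((Algebra.TensorProduct.map f g).comp Δ)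

/-- The constant point induced by a counit-type map `ε : A →ₐ[k] k`. -/
noncomputable def ptConst (k A : Type) [Field k] [CommRing A] [Algebra k A]
    (ε : A →ₐ[k] k) {R : Type} [CommRing R] [Algebra k R] : A →ₐ[k] R :=
  (Algebra.ofId k R).comp ε

/-- A `k`-biring structure on the commutative `k`-algebra `A`; equivalently, the structure of
an affine ring scheme on `Spec A` over `k`. -/
structure Biring (k A : Type) [Field k] [CommRing A] [Algebra k A] where
  coadd : A →ₐ[k] A ⊗[k] A
  counitAdd : A →ₐ[k] k
  antipode : A →ₐ[k] A
  comul : A →ₐ[k] A ⊗[k] A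
  counitMul : A →ₐ[k] k
  pt_add_assoc : ∀ (R : Type) [CommRing R] [Algebra k R] (f g h : A →ₐ[k] R),
    ptOp k A coadd (ptOp k A coadd f g) h = ptOp k A coadd f (ptOp k A coadd g h)
  pt_add_comm : ∀ (R : Type) [CommRing R] [Algebra k R] (f g : A →ₐ[k] R),
    ptOp k A coadd f g = ptOp k A coadd g f
  pt_zero_add : ∀ (R : Type) [CommRing R] [Algebra k R] (f : A →ₐ[k] R),
    ptOp k A coadd (ptConst k A counitAdd) f = f
  pt_add_neg : ∀ (R : Type) [CommRing R] [Algebra k R] (f : A →ₐ[k] R),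
    ptOp k A coadd f (f.comp antipode) = ptConst k A counitAdd
  pt_mul_assoc : ∀ (R : Type) [CommRing R] [Algebra k R] (f g h : A →ₐ[k] R),
    ptOp k A comul (ptOp k A comul f g) h = ptOp k A comul f (ptOp k A comul g h)
  pt_mul_comm : ∀ (R : Type) [CommRing R] [Algebra k R] (f g : A →ₐ[k] R),
    ptOp k A comul f g = ptOp k A comul g f
  pt_one_mul : ∀ (R : Type) [CommRing R] [Algebra k R] (f : A →ₐ[k] R),
    ptOp k A comul (ptConst k A counitMul) f = f
  pt_mul_add : ∀ (R : Type) [CommRing R] [Algebra k R] (f g h : A →ₐ[k] R),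
    ptOp k A comul f (ptOp k A coadd g h)
      = ptOp k A coadd (ptOp k A comul f g) (ptOp k A comul f h)

/-- The `k`-submodule `I ⊗ A + A ⊗ I` of `A ⊗[k] A` spanned by the elements `i ⊗ a` and
`a ⊗ i` with `i ∈ I`, `a ∈ A`. -/
def sideIdeal (k A : Type) [Field k] [CommRing A] [Algebra k A] (I : Ideal A) :
    Submodule k (A ⊗[k] A) :=
  Submodule.span k {x : A ⊗[k] A | ∃ i ∈ I, ∃ a : A, x = i ⊗ₜ[k] a ∨ x = a ⊗ₜ[k] i}

/-!
The ring scheme `Spec A` acts on its additive group by multiplication. The functionals on `A` form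
a commutative algebra under additive convolution, acting on `A`, and every element of `A` lies in a
finite-dimensional submodule. If `(A, Δ⁺)` were not conilpotent, some such submodule would carry a
nonzero idempotent functional `u` with `u 1 = 0`. The family `t ↦ t · u` obtained by scaling `u` is
then an idempotent of the convolution algebra over the connected base `Spec A`; its values generate
a finitely generated idempotent ideal, so the family vanishes everywhere as soon as it vanishes
somewhere. It does at `t = 0`, hence also at `t = 1`, where it is `u`. So `(A, Δ⁺)` is conilpotent,
and an element of `ker ε⁺ \ I` killed by the smallest power of the augmentation ideal of the dual
algebra is primitive modulo `I`.
-/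

section Ideals

variable {R M : Type*} [CommRing R]

theorem eq_bot_of_fg_of_isIdempotentElem (hconn : ∀ e : R, IsIdempotentElem e → e = 0 ∨ e = 1)
    {J : Ideal R} (hfg : J.FG) (hJ : IsIdempotentElem J) (hne : J ≠ ⊤) : J = ⊥ := by
  obtain ⟨e, he, rfl⟩ := (Ideal.isIdempotentElem_iff_of_fg J hfg).1 hJ
  rcases hconn e he with rfl | rfl
  · exact Ideal.span_singleton_eq_bot.2 rfl
  · exact absurd Ideal.span_singleton_one hne

variable [AddCommGroup M] [Module R M]

/- The powers `I ^ n • ⊤` stabilize, and Nakayama provides `r ∈ I` acting as the identity on the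
stable submodule; `u` is a power of `r`. -/
theorem exists_mem_idempotent_smul_pow_smul [IsNoetherian R M] [IsArtinian R M] (I : Ideal R) :
    ∃ u ∈ I, ∃ n, (∀ m : M, u • u • m = u • m) ∧ ∀ f ∈ I ^ n, ∀ m : M, u • f • m = f • m := by
  obtain ⟨n, hn⟩ := IsArtinian.monotone_stabilizes
    (⟨fun n ↦ OrderDual.toDual (I ^ n • (⊤ : Submodule R M)),
      fun _ _ h ↦ Submodule.smul_mono_left (Ideal.pow_le_pow_right h)⟩ : ℕ →o (Submodule R M)ᵒᵈ)
  let N : Submodule R M := I ^ n • ⊤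
  have hstable (l : ℕ) (hl : n ≤ l) : N = I ^ l • ⊤ := hn l hl
  have hN : N ≤ I • N := by
    rw [← mul_smul, ← pow_succ']
    exact (hstable (n + 1) n.le_succ).le
  obtain ⟨r, hrI, hr⟩ := Submodule.exists_mem_and_smul_eq_self_of_fg_of_le_smul I N
    (IsNoetherian.noetherian N) hN
  have hpow (l : ℕ) : ∀ m ∈ N, r ^ l • m = m := by
    induction l with
    | zero => simp
    | succ l ih => intro m hm; rw [pow_succ, mul_smul, hr m hm, ih m hm]
  have hrN (m : M) : r ^ (n + 1) • m ∈ N := by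
    rw [hstable (n + 1) n.le_succ]
    exact Submodule.smul_mem_smul (Ideal.pow_mem_pow hrI _) trivial
  exact ⟨r ^ (n + 1), Ideal.pow_mem_of_mem I hrI _ n.succ_pos, n, fun m ↦ hpow _ _ (hrN m),
    fun f hf m ↦ hpow _ _ (Submodule.smul_mem_smul hf trivial)⟩

end Ideals

section Contraction

variable {k M N P : Type*}

section CommSemiring

variable [CommSemiring k] [AddCommMonoid M] [Module k M] [AddCommMonoid N] [Module k N]
  [AddCommMonoid P] [Module k P]

/-- The contraction `(id ⊗ φ) ∘ Δ` of the second leg of `Δ` against the functional `φ`. -/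
noncomputable def contract (Δ : M →ₗ[k] N ⊗[k] P) (φ : P →ₗ[k] k) : M →ₗ[k] N :=
  TensorProduct.rid k N ∘ₗ φ.lTensor N ∘ₗ Δ

theorem rid_lTensor_rTensor (f : M →ₗ[k] N) (φ : P →ₗ[k] k) (t : M ⊗[k] P) :
    TensorProduct.rid k N (φ.lTensor N (f.rTensor P t)) =
      f (TensorProduct.rid k M (φ.lTensor M t)) := by
  have hcomp : (TensorProduct.rid k N : _ →ₗ[k] N) ∘ₗ φ.lTensor N ∘ₗ f.rTensor P =
      f ∘ₗ TensorProduct.rid k M ∘ₗ φ.lTensor M := by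
    ext; simp
  exact LinearMap.congr_fun hcomp t

theorem contract_mem_of_mem_range {Δ : M →ₗ[k] N ⊗[k] P} {V : Submodule k N} {m : M}
    (hm : Δ m ∈ LinearMap.range (V.subtype.rTensor P)) (φ : P →ₗ[k] k) :
    contract Δ φ m ∈ V := by
  obtain ⟨t, ht⟩ := hm
  simp only [contract, LinearMap.comp_apply, LinearEquiv.coe_coe, ← ht, rid_lTensor_rTensor]
  exact Submodule.coe_mem _

theorem contract_apply_congr {Δ : M →ₗ[k] N ⊗[k] P} {W : Submodule k P} {m : M}
    (hm : Δ m ∈ LinearMap.range (W.subtype.lTensor N)) {φ ψ : P →ₗ[k] k}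
    (h : ∀ w ∈ W, φ w = ψ w) : contract Δ φ m = contract Δ ψ m := by
  obtain ⟨t, ht⟩ := hm
  have hres : φ ∘ₗ W.subtype = ψ ∘ₗ W.subtype := LinearMap.ext fun w ↦ h w w.2
  simp only [contract, LinearMap.comp_apply, ← ht, ← LinearMap.lTensor_comp_apply, hres]

theorem exists_finite_forall_mem_range_lTensor_span
    (Δ : M →ₗ[k] N ⊗[k] P) {V : Submodule k M} (hV : V.FG) :
    ∃ s : Set P, s.Finite ∧
      ∀ m ∈ V, Δ m ∈ LinearMap.range ((Submodule.span k s).subtype.lTensor N) := by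
  obtain ⟨s, rfl⟩ := hV
  obtain ⟨W, hW, hsW⟩ := TensorProduct.exists_finite_submodule_right_of_setFinite
    (Δ '' s) (s.finite_toSet.image _) (R := k)
  obtain ⟨t, rfl⟩ := Module.Finite.iff_fg.1 hW
  refine ⟨t, t.finite_toSet, fun m hm ↦ ?_⟩
  exact (Submodule.span_le (p := (LinearMap.range _).comap Δ)).2
    (fun m hm ↦ hsW (Set.mem_image_of_mem _ hm)) hm

end CommSemiring

section Field

variable [Field k] [AddCommGroup M] [Module k M] [AddCommGroup N] [Module k N]

theorem tensor_eq_zero_of_forall_rid_lTensor {t : M ⊗[k] N}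
    (ht : ∀ φ : N →ₗ[k] k, TensorProduct.rid k M (φ.lTensor M t) = 0) : t = 0 := by
  classical
  let b := Module.Basis.ofVectorSpace k N
  refine (TensorProduct.equivFinsuppOfBasisRight b).map_eq_zero_iff.1 (Finsupp.ext fun i ↦ ?_)
  rw [TensorProduct.equivFinsuppOfBasisRight_apply, ht, Finsupp.zero_apply]

theorem tensor_eq_zero_of_forall_mul'_map {t : M ⊗[k] N}
    (ht : ∀ (φ : M →ₗ[k] k) (ψ : N →ₗ[k] k), LinearMap.mul' k k (TensorProduct.map φ ψ t) = 0) :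
    t = 0 := by
  refine tensor_eq_zero_of_forall_rid_lTensor fun ψ ↦
    (Module.forall_dual_apply_eq_zero_iff k _).1 fun φ ↦ ?_
  have hcomp : φ ∘ₗ TensorProduct.rid k M ∘ₗ ψ.lTensor M =
      LinearMap.mul' k k ∘ₗ TensorProduct.map φ ψ := by
    ext; simp [mul_comm]
  exact (LinearMap.congr_fun hcomp t).trans (ht φ ψ)

theorem rTensor_apply_eq_self_of_forall_mem {V : Submodule k M} {p : M →ₗ[k] M}
    (hp : ∀ v ∈ V, p v = v) {t : M ⊗[k] N}
    (ht : ∀ φ : N →ₗ[k] k, TensorProduct.rid k M (φ.lTensor M t) ∈ V) : p.rTensor N t = t := by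
  rw [← sub_eq_zero]
  refine tensor_eq_zero_of_forall_rid_lTensor fun φ ↦ ?_
  rw [map_sub, map_sub, rid_lTensor_rTensor, hp _ (ht φ), sub_self]

theorem mem_range_mapIncl_of_comm_eq_self {V : Submodule k M} {t : M ⊗[k] M}
    (hcomm : TensorProduct.comm k M M t = t)
    (ht : ∀ φ : M →ₗ[k] k, TensorProduct.rid k M (φ.lTensor M t) ∈ V) :
    t ∈ LinearMap.range (TensorProduct.mapIncl V V) := by
  obtain ⟨p, hp⟩ := V.subtype.exists_leftInverse_of_injective V.ker_subtype
  let q : M →ₗ[k] M := V.subtype ∘ₗ p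
  have hq : ∀ v ∈ V, q v = v := fun v hv ↦ congrArg V.subtype (LinearMap.congr_fun hp ⟨v, hv⟩)
  have hright : q.rTensor M t = t := rTensor_apply_eq_self_of_forall_mem hq ht
  have hleft : q.lTensor M t = t := by
    rw [LinearMap.lTensor, ← hcomm, TensorProduct.map_comm]
    exact congrArg _ hright
  refine ⟨TensorProduct.map p p t, ?_⟩
  rw [TensorProduct.mapIncl, ← LinearMap.comp_apply, ← TensorProduct.map_comp]
  change TensorProduct.map q q t = t
  rw [← LinearMap.lTensor_comp_rTensor, LinearMap.comp_apply, hright, hleft]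

end Field

end Contraction

section DualAction

open Coalgebra WithConv

variable {k C : Type*}

section CommSemiring

variable [CommSemiring k] [AddCommMonoid C] [Module k C] [Coalgebra k C]

/-- The dual algebra of a coalgebra: linear functionals under convolution. -/
abbrev ConvDual (k C : Type*) [CommSemiring k] [AddCommMonoid C] [Module k C] : Type _ :=
  WithConv (C →ₗ[k] k)

theorem contract_comul_convMul (φ ψ : ConvDual k C) (c : C) :
    contract comul (φ * ψ).ofConv c = contract comul φ.ofConv (contract comul ψ.ofConv c) := by
  have hcomp : (TensorProduct.rid k C : _ →ₗ[k] C) ∘ₗ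
        (LinearMap.mul' k k ∘ₗ TensorProduct.map φ.ofConv ψ.ofConv).lTensor C ∘ₗ
        TensorProduct.assoc k C C C =
      TensorProduct.rid k C ∘ₗ φ.ofConv.lTensor C ∘ₗ TensorProduct.rid k (C ⊗[k] C) ∘ₗ
        ψ.ofConv.lTensor (C ⊗[k] C) :=
    TensorProduct.ext_threefold fun x y z ↦ by
      simp [mul_smul, smul_comm (φ.ofConv y)]
  calc TensorProduct.rid k C (((LinearMap.mul' k k ∘ₗ
          TensorProduct.map φ.ofConv ψ.ofConv) ∘ₗ comul).lTensor C (comul c))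
      = TensorProduct.rid k C (φ.ofConv.lTensor C (TensorProduct.rid k (C ⊗[k] C)
          (ψ.ofConv.lTensor (C ⊗[k] C) (comul.rTensor C (comul c))))) := by
        rw [LinearMap.lTensor_comp_apply, ← coassoc_apply]
        exact LinearMap.congr_fun hcomp _
    _ = _ := by rw [rid_lTensor_rTensor]; rfl

/-- The action of the dual algebra on a coalgebra: `φ • c = (id ⊗ φ) (Δ c)`. -/
noncomputable instance convDualModule : Module (ConvDual k C) C where
  smul φ c := contract comul φ.ofConv c
  one_smul c := by
    change TensorProduct.rid k C (counit.lTensor C (comul c)) = c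
    simp
  mul_smul := contract_comul_convMul
  smul_zero φ := map_zero _
  smul_add φ := map_add _
  add_smul φ ψ c := by
    change contract comul (φ.ofConv + ψ.ofConv) c =
      contract comul φ.ofConv c + contract comul ψ.ofConv c
    simp [contract]
  zero_smul c := by
    change contract comul 0 c = 0
    simp [contract]

theorem conv_smul_def (φ : ConvDual k C) (c : C) : φ • c = contract comul φ.ofConv c :=
  rfl

instance : IsScalarTower k (ConvDual k C) C where
  smul_assoc r φ c := by
    simp [conv_smul_def, contract, LinearMap.lTensor_smul]

theorem convMul_apply_eq_apply_smul (φ ψ : ConvDual k C) (c : C) :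
    (φ * ψ) c = φ (ψ • c) := by
  have hcomp : LinearMap.mul' k k ∘ₗ TensorProduct.map φ.ofConv ψ.ofConv =
      φ.ofConv ∘ₗ TensorProduct.rid k C ∘ₗ ψ.ofConv.lTensor C := by
    ext; simp [mul_comm]
  exact LinearMap.congr_fun hcomp (comul c)

theorem counit_conv_smul (φ : ConvDual k C) (c : C) : counit (R := k) (φ • c) = φ c := by
  simpa using (convMul_apply_eq_apply_smul 1 φ c).symm

theorem conv_smul_of_isGroupLikeElem {g : C} (hg : IsGroupLikeElem k g) (φ : ConvDual k C) :
    φ • g = φ g • g := by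
  simp [conv_smul_def, contract, hg.comul_eq_tmul_self]

end CommSemiring

section Field

variable [Field k] [AddCommGroup C] [Module k C] [Coalgebra k C]

theorem finite_span_convDual {s : Set C} (hs : s.Finite) :
    Module.Finite k (Submodule.span (ConvDual k C) s) := by
  obtain ⟨V, hV, hsV⟩ := TensorProduct.exists_finite_submodule_left_of_setFinite
    (comul '' s) (hs.image _) (R := k)
  have hle : (Submodule.span (ConvDual k C) s).restrictScalars k ≤ V := by
    intro x hx
    induction (hx : x ∈ Submodule.span (ConvDual k C) s) using
      Submodule.closure_induction with
    | zero => exact V.zero_mem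
    | add x y _ _ hx hy => exact V.add_mem hx hy
    | smul_mem φ x hx => exact contract_mem_of_mem_range (hsV ⟨x, hx, rfl⟩) φ.ofConv
  exact Submodule.finiteDimensional_of_le hle

theorem comul_mem_range_mapIncl [IsCocomm k C] (V : Submodule (ConvDual k C) C) {c : C}
    (hc : c ∈ V) :
    comul c ∈ LinearMap.range
      (TensorProduct.mapIncl (V.restrictScalars k) (V.restrictScalars k)) :=
  mem_range_mapIncl_of_comm_eq_self (comm_comul k c)
    fun φ ↦ V.smul_mem (toConv φ) hc

end Field

end DualAction

section ConvolutionIdempotent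

open Coalgebra

variable {k C A K : Type*} [CommSemiring k] [AddCommMonoid C] [Module k C] [Coalgebra k C]
  [CommRing A] [Algebra k A] [Semiring K] [Nontrivial K]

theorem convIdempotent_eq_zero (hconn : ∀ e : A, IsIdempotentElem e → e = 0 ∨ e = 1)
    {V : Submodule k C} (hV : V.FG)
    (hcomul : ∀ c ∈ V, comul c ∈ LinearMap.range (TensorProduct.mapIncl V V))
    {f : WithConv (C →ₗ[k] A)} (hf : ∀ c ∈ V, (f * f) c = f c)
    (q : A →+* K) (hq : ∀ c ∈ V, q (f c) = 0) : ∀ c ∈ V, f c = 0 := by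
  let J : Ideal A := Ideal.span (V.map f.ofConv : Submodule k A)
  have hmem : ∀ c ∈ V, f c ∈ J := fun c hc ↦ Ideal.subset_span ⟨c, hc, rfl⟩
  have hfg : J.FG := by
    obtain ⟨s, hs⟩ := hV.map f.ofConv
    exact ⟨s, by simp only [J, ← hs, Ideal.span, Submodule.span_span_of_tower]⟩
  have hmul (t : V ⊗[k] V) : LinearMap.mul' k A
      (TensorProduct.map f.ofConv f.ofConv (TensorProduct.mapIncl V V t)) ∈ J * J := by
    induction t with
    | zero => simp
    | tmul v w => exact Ideal.mul_mem_mul (hmem v v.2) (hmem w w.2)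
    | add t₁ t₂ h₁ h₂ => simpa only [map_add] using add_mem h₁ h₂
  have hidem : IsIdempotentElem J := by
    refine Ideal.mul_le_left.antisymm (Ideal.span_le.2 ?_)
    rintro _ ⟨c, hc, rfl⟩
    obtain ⟨t, ht⟩ := hcomul c hc
    change f c ∈ J * J
    rw [← hf c hc, LinearMap.convMul_apply, ← ht]
    exact hmul t
  have hle : J ≤ RingHom.ker q := Ideal.span_le.2 <| by
    rintro _ ⟨c, hc, rfl⟩
    exact hq c hc
  have hne : J ≠ ⊤ := fun h ↦ RingHom.ker_ne_top q (top_le_iff.1 (h ▸ hle))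
  have hbot : J = ⊥ := eq_bot_of_fg_of_isIdempotentElem hconn hfg hidem hne
  exact fun c hc ↦ (Submodule.mem_bot A).1 (hbot ▸ hmem c hc)

end ConvolutionIdempotent

section Conilpotent

open Coalgebra WithConv

/-- A coalgebra with a distinguished element `g` (in practice group-like) is conilpotent when every
element is annihilated by a power of the ideal of functionals `φ` with `φ • g = 0`, that is, of the
augmentation ideal of the dual algebra. Iterated reduced comultiplications are thus expressed
through products of functionals. -/
def IsConilpotent (k : Type*) {C : Type*} [CommSemiring k] [AddCommMonoid C] [Module k C]
    [Coalgebra k C] (g : C) : Prop :=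
  ∀ x : C, ∃ n, ∀ f ∈ Ideal.torsionOf (ConvDual k C) C g ^ n, f • x = 0

variable {k C : Type*} [Field k] [AddCommGroup C] [Module k C] [Coalgebra k C] {g : C}

theorem mem_torsionOf_iff_of_isGroupLikeElem (hg : IsGroupLikeElem k g)
    {φ : ConvDual k C} :
    φ ∈ Ideal.torsionOf (ConvDual k C) C g ↔ φ g = 0 := by
  rw [Ideal.mem_torsionOf_iff, conv_smul_of_isGroupLikeElem hg, smul_eq_zero_iff_left hg.ne_zero]

theorem map_mkQ_eq_zero_of_forall_convMul_eq_zero (hg : IsGroupLikeElem k g) {I : Submodule k C}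
    (hI : I ≤ LinearMap.ker (counit (R := k) (A := C))) {x : C} (hx : counit (R := k) x = 0)
    (h : ∀ φ ψ : ConvDual k C, (∀ i ∈ I, φ i = 0) → (∀ i ∈ I, ψ i = 0) →
      φ g = 0 → ψ g = 0 → (φ * ψ) x = 0) :
    TensorProduct.map I.mkQ I.mkQ (comul x - x ⊗ₜ[k] g - g ⊗ₜ[k] x) = 0 := by
  refine tensor_eq_zero_of_forall_mul'_map fun φ ψ ↦ ?_
  let center (χ : C ⧸ I →ₗ[k] k) : ConvDual k C := toConv (χ ∘ₗ I.mkQ) - χ (I.mkQ g) • 1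
  have hcenter_apply (χ : C ⧸ I →ₗ[k] k) (c : C) :
      center χ c = χ (I.mkQ c) - χ (I.mkQ g) * counit (R := k) c := rfl
  have hcenter (χ : C ⧸ I →ₗ[k] k) : ∀ i ∈ I, center χ i = 0 := fun i hi ↦ by
    rw [hcenter_apply, I.mkQ_apply, (Submodule.Quotient.mk_eq_zero I).2 hi, hI hi]
    simp
  have hcenter_g (χ : C ⧸ I →ₗ[k] k) : center χ g = 0 := by simp [hcenter_apply, hg]
  have hexpand : center φ * center ψ =
      toConv (φ ∘ₗ I.mkQ) * toConv (ψ ∘ₗ I.mkQ) - φ (I.mkQ g) • toConv (ψ ∘ₗ I.mkQ) -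
        ψ (I.mkQ g) • center φ := by
    simp [center, sub_mul, mul_sub]
  have hprod := h _ _ (hcenter φ) (hcenter ψ) (hcenter_g φ) (hcenter_g ψ)
  have hmap : LinearMap.mul' k k (TensorProduct.map φ ψ (TensorProduct.map I.mkQ I.mkQ (comul x))) =
      (toConv (φ ∘ₗ I.mkQ) * toConv (ψ ∘ₗ I.mkQ)) x := by
    rw [LinearMap.convMul_apply, ← LinearMap.comp_apply (TensorProduct.map φ ψ),
      ← TensorProduct.map_comp]
  rw [hexpand] at hprod
  change (toConv (φ ∘ₗ I.mkQ) * toConv (ψ ∘ₗ I.mkQ)) x - φ (I.mkQ g) * ψ (I.mkQ x) -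
    ψ (I.mkQ g) * center φ x = 0 at hprod
  simp only [map_sub, hmap, TensorProduct.map_tmul, LinearMap.mul'_apply]
  rw [hcenter_apply, hx] at hprod
  linear_combination hprod

theorem exists_map_mkQ_eq_zero_of_pow_torsionOf_smul (hg : IsGroupLikeElem k g)
    {I : Submodule k C} (hI : I ≤ LinearMap.ker (counit (R := k) (A := C))) (n : ℕ) {x : C}
    (hxI : x ∉ I) (hx : counit (R := k) x = 0)
    (hn : ∀ f ∈ Ideal.torsionOf (ConvDual k C) C g ^ (n + 1), f • x = 0) :
    ∃ y ∉ I, TensorProduct.map I.mkQ I.mkQ (comul y - y ⊗ₜ[k] g - g ⊗ₜ[k] y) = 0 := by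
  induction n generalizing x with
  | zero =>
    refine absurd ((Module.forall_dual_apply_eq_zero_iff k x).1 fun f ↦ ?_)
      (ne_of_mem_of_not_mem I.zero_mem hxI).symm
    let φ : ConvDual k C := toConv f - f g • 1
    have hφ (c : C) : φ c = f c - f g * counit (R := k) c := rfl
    have hφg : φ ∈ Ideal.torsionOf (ConvDual k C) C g :=
      (mem_torsionOf_iff_of_isGroupLikeElem hg).2 (by simp [hφ, hg])
    have hφx : φ x = 0 := by
      rw [← counit_conv_smul, hn φ (by rwa [zero_add, Submodule.pow_one]), map_zero]
    simpa [hφ, hx] using hφx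
  | succ n ih =>
    by_cases h : ∀ φ ψ : ConvDual k C, (∀ i ∈ I, φ i = 0) → (∀ i ∈ I, ψ i = 0) →
      φ g = 0 → ψ g = 0 → (φ * ψ) x = 0
    · exact ⟨x, hxI, map_mkQ_eq_zero_of_forall_convMul_eq_zero hg hI hx h⟩
    push Not at h
    obtain ⟨φ, ψ, hφI, -, hφg, hψg, hφψ⟩ := h
    refine ih (x := ψ • x - ψ x • g) (fun hmem ↦ hφψ ?_) ?_ fun f hf ↦ ?_
    · calc (φ * ψ) x = φ (ψ • x - ψ x • g) := by
            rw [convMul_apply_eq_apply_smul, map_sub φ.ofConv, map_smul φ.ofConv, hφg, smul_zero,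
              sub_zero]
        _ = 0 := hφI _ hmem
    · simp [counit_conv_smul, hg]
    · have hψ := (mem_torsionOf_iff_of_isGroupLikeElem hg).2 hψg
      have hfg : f • g = 0 := Ideal.pow_le_self n.succ_ne_zero hf
      have hfx : f • ψ • x = 0 := by
        rw [← mul_smul]
        refine hn _ ?_
        rw [Submodule.pow_succ]
        exact Ideal.mul_mem_mul hf hψ
      rw [smul_sub, hfx, smul_algebra_smul_comm, hfg, smul_zero, sub_zero]

theorem IsConilpotent.exists_map_mkQ_eq_zero (hC : IsConilpotent k g) (hg : IsGroupLikeElem k g)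
    {I : Submodule k C} (hI : I < LinearMap.ker (counit (R := k) (A := C))) :
    ∃ x ∉ I, TensorProduct.map I.mkQ I.mkQ (comul x - x ⊗ₜ[k] g - g ⊗ₜ[k] x) = 0 := by
  obtain ⟨x, hx, hxI⟩ := SetLike.exists_of_lt hI
  obtain ⟨n, hn⟩ := hC x
  exact exists_map_mkQ_eq_zero_of_pow_torsionOf_smul hg hI.le n hxI hx
    fun f hf ↦ hn f (Ideal.pow_le_pow_right n.le_succ hf)

end Conilpotent

section Scaling

open Coalgebra WithConv

variable {k A : Type*}

/-- The structure left on the additive group `Spec A` of a ring scheme by multiplication by a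
variable scalar: `μ : A → A ⊗ A` stands for `(t, s) ↦ t * s`, and `e` for evaluation at `t = 1`. -/
structure IsScaling [CommSemiring k] [Semiring A] [Bialgebra k A] (μ : A →ₗ[k] A ⊗[k] A)
    (e : A →ₗ[k] k) : Prop where
  contract_convMul (φ ψ : ConvDual k A) :
    toConv (contract μ (φ * ψ).ofConv) = toConv (contract μ φ.ofConv) * toConv (contract μ ψ.ofConv)
  counit_contract (φ : A →ₗ[k] k) (a : A) : counit (R := k) (contract μ φ a) = counit a * φ 1
  apply_contract (φ : A →ₗ[k] k) (a : A) : e (contract μ φ a) = φ a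

namespace IsScaling

theorem apply_eq_zero_of_idempotent [CommSemiring k] [Nontrivial k] [CommRing A] [Bialgebra k A]
    {μ : A →ₗ[k] A ⊗[k] A} {e : A →ₗ[k] k} (hμ : IsScaling μ e)
    (hconn : ∀ a : A, IsIdempotentElem a → a = 0 ∨ a = 1) {V W : Submodule k A} (hV : V.FG)
    (hcomul : ∀ a ∈ V, comul a ∈ LinearMap.range (TensorProduct.mapIncl V V))
    (hW : ∀ a ∈ V, μ a ∈ LinearMap.range (W.subtype.lTensor A))
    {u : ConvDual k A} (hu : ∀ w ∈ W, (u * u) w = u w) (hu1 : u 1 = 0) :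
    ∀ a ∈ V, u a = 0 := by
  have hzero : ∀ a ∈ V, toConv (contract μ u.ofConv) a = 0 := by
    refine convIdempotent_eq_zero hconn hV hcomul (fun a ha ↦ ?_)
      (Bialgebra.counitAlgHom k A).toRingHom fun a _ ↦ ?_
    · rw [← hμ.contract_convMul]
      exact contract_apply_congr (hW a ha) hu
    · exact (hμ.counit_contract _ a).trans (by rw [hu1, mul_zero])
  intro a ha
  rw [← hμ.apply_contract]
  exact (congrArg e (hzero a ha)).trans (map_zero e)

theorem isConilpotent_one [Field k] [CommRing A] [Bialgebra k A] [IsCocomm k A]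
    {μ : A →ₗ[k] A ⊗[k] A} {e : A →ₗ[k] k} (hμ : IsScaling μ e)
    (hconn : ∀ a : A, IsIdempotentElem a → a = 0 ∨ a = 1) : IsConilpotent k (1 : A) := by
  intro x
  let V : Submodule (ConvDual k A) A := Submodule.span (ConvDual k A) {x}
  have hVfin : Module.Finite k V := finite_span_convDual (Set.finite_singleton x)
  have hVfg : (V.restrictScalars k).FG := Module.Finite.iff_fg.1 hVfin
  obtain ⟨s, hs, hμs⟩ := exists_finite_forall_mem_range_lTensor_span μ hVfg
  let D : Submodule (ConvDual k A) A := Submodule.span (ConvDual k A) (insert x s)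
  have hDfin : Module.Finite k D := finite_span_convDual (hs.insert x)
  have : IsNoetherian (ConvDual k A) D :=
    isNoetherian_of_tower k (isNoetherian_of_isNoetherianRing_of_finite k D)
  have : IsArtinian (ConvDual k A) D :=
    isArtinian_of_tower k (isArtinian_of_fg_of_artinian' (R := k) (M := D))
  obtain ⟨u, hu1, n, huu, hun⟩ :=
    exists_mem_idempotent_smul_pow_smul (M := D) (Ideal.torsionOf (ConvDual k A) A 1)
  have hidem : ∀ w ∈ Submodule.span k s, (u * u) w = u w := fun w hw ↦ by
    have hwD : w ∈ D := Submodule.span_mono (Set.subset_insert x s)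
      (Submodule.span_le_restrictScalars k (ConvDual k A) s hw)
    rw [← counit_conv_smul, mul_smul, ← counit_conv_smul u]
    exact congrArg (fun d : D ↦ counit (R := k) (d : A)) (huu ⟨w, hwD⟩)
  have huV : ∀ a ∈ V, u a = 0 := hμ.apply_eq_zero_of_idempotent hconn hVfg
    (fun a ha ↦ comul_mem_range_mapIncl V ha) hμs hidem
    ((mem_torsionOf_iff_of_isGroupLikeElem .one).1 hu1)
  have husmul : ∀ a ∈ V, u • a = 0 := fun a ha ↦
    (Module.forall_dual_apply_eq_zero_iff k _).1 fun φ ↦ by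
      change toConv φ (u • a) = 0
      rw [← convMul_apply_eq_apply_smul, mul_comm, convMul_apply_eq_apply_smul]
      exact huV _ (V.smul_mem _ ha)
  refine ⟨n, fun f hf ↦ ?_⟩
  have hfx : u • f • x = f • x := congrArg Subtype.val
    (hun f hf ⟨x, Submodule.subset_span (Set.mem_insert x s)⟩)
  rw [← hfx]
  exact husmul _ (V.smul_mem f (Submodule.mem_span_singleton_self x))

end IsScaling

end Scaling

section Points

open Algebra.TensorProduct

theorem rid_lTensor_map_mul_map {k A B C : Type*} [CommSemiring k] [CommSemiring A] [Algebra k A]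
    [CommSemiring B] [Algebra k B] [CommSemiring C] [Algebra k C] (φ : B →ₗ[k] k) (ψ : C →ₗ[k] k)
    (s : A ⊗[k] B) (t : A ⊗[k] C) :
    TensorProduct.rid k A ((LinearMap.mul' k k ∘ₗ TensorProduct.map φ ψ).lTensor A
        (map (AlgHom.id k A) includeLeft s * map (AlgHom.id k A) includeRight t)) =
      TensorProduct.rid k A (φ.lTensor A s) * TensorProduct.rid k A (ψ.lTensor A t) := by
  induction s with
  | zero => simp
  | add s₁ s₂ h₁ h₂ => simp only [map_add, add_mul, h₁, h₂]
  | tmul a b =>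
    induction t with
    | zero => simp
    | add t₁ t₂ h₁ h₂ => simp only [map_add, mul_add, h₁, h₂]
    | tmul a' c => simp [mul_smul, smul_comm (φ b)]

variable {k A : Type} [Field k] [CommRing A] [Algebra k A]

theorem ptOp_eq_productMap_comp (Δ : A →ₐ[k] A ⊗[k] A) {R : Type} [CommRing R] [Algebra k R]
    (f g : A →ₐ[k] R) : ptOp k A Δ f g = (productMap f g).comp Δ := by
  rw [productMap_eq_comp_map]
  rfl

theorem comp_eq_ptOp (Δ : A →ₐ[k] A ⊗[k] A) {R : Type} [CommRing R] [Algebra k R]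
    (h : A ⊗[k] A →ₐ[k] R) :
    h.comp Δ = ptOp k A Δ (h.comp includeLeft) (h.comp includeRight) := by
  have hprod : productMap (h.comp includeLeft) (h.comp includeRight) = h := by
    ext <;> simp [← map_mul]
  rw [ptOp_eq_productMap_comp, hprod]

theorem map_comp_eq_ptOp (Δ : A →ₐ[k] A ⊗[k] A) {R S : Type} [CommRing R] [Algebra k R]
    [CommRing S] [Algebra k S] (f : A →ₐ[k] R) (g : A →ₐ[k] S) :
    (map f g).comp Δ = ptOp k A Δ (includeLeft.comp f) (includeRight.comp g) := by
  rw [comp_eq_ptOp, map_comp_includeLeft, map_comp_includeRight]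

theorem map_id_comp_eq_ptOp_ptOp (Δ Δ' : A →ₐ[k] A ⊗[k] A) :
    (map (AlgHom.id k A) Δ').comp Δ =
      ptOp k A Δ includeLeft
        (ptOp k A Δ' (includeRight.comp includeLeft) (includeRight.comp includeRight)) := by
  rw [map_comp_eq_ptOp, AlgHom.comp_id, ← comp_eq_ptOp]

theorem apply_contract_eq_apply_ptOp (Δ : A →ₐ[k] A ⊗[k] A) (p : A →ₐ[k] k) (φ : A →ₗ[k] k)
    (a : A) :
    p (contract Δ.toLinearMap φ a) = φ (ptOp k A Δ (ptConst k A p) (AlgHom.id k A) a) := by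
  have hcomp : p.toLinearMap ∘ₗ TensorProduct.rid k A ∘ₗ φ.lTensor A =
      φ ∘ₗ (productMap (ptConst k A p) (AlgHom.id k A)).toLinearMap := by
    ext x y
    simp [ptConst, Algebra.ofId_apply, ← Algebra.smul_def, mul_comm (φ y)]
  rw [ptOp_eq_productMap_comp]
  exact LinearMap.congr_fun hcomp (Δ a)

end Points

namespace Biring

open Algebra.TensorProduct WithConv

variable {k A : Type} [Field k] [CommRing A] [Algebra k A] (B : Biring k A)

theorem coadd_coassoc :
    (Algebra.TensorProduct.assoc k k k A A A).toAlgHom.comp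
        ((map B.coadd (AlgHom.id k A)).comp B.coadd) =
      (map (AlgHom.id k A) B.coadd).comp B.coadd := by
  let α := (Algebra.TensorProduct.assoc k k k A A A).toAlgHom
  have hleft : (α.comp (map B.coadd (AlgHom.id k A))).comp includeLeft =
      ptOp k A B.coadd includeLeft (includeRight.comp includeLeft) := by
    rw [AlgHom.comp_assoc, map_comp_includeLeft, ← AlgHom.comp_assoc, comp_eq_ptOp]
    rfl
  have hright : (α.comp (map B.coadd (AlgHom.id k A))).comp includeRight =
      includeRight.comp includeRight := by
    ext; simp [α]; rfl
  rw [← AlgHom.comp_assoc, comp_eq_ptOp, hleft, hright, B.pt_add_assoc, map_id_comp_eq_ptOp_ptOp]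

theorem counitAdd_rTensor_comp_coadd :
    (map B.counitAdd (AlgHom.id k A)).comp B.coadd = (Algebra.TensorProduct.lid k A).symm := by
  have hunit : (includeLeft : k →ₐ[k] k ⊗[k] A).comp B.counitAdd = ptConst k A B.counitAdd := by
    rw [ptConst, Subsingleton.elim includeLeft (Algebra.ofId k (k ⊗[k] A))]
  rw [map_comp_eq_ptOp, hunit, AlgHom.comp_id, B.pt_zero_add]
  ext; simp

theorem counitAdd_lTensor_comp_coadd :
    (map (AlgHom.id k A) B.counitAdd).comp B.coadd = (Algebra.TensorProduct.rid k k A).symm := by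
  have hunit : (includeRight : k →ₐ[k] A ⊗[k] k).comp B.counitAdd = ptConst k A B.counitAdd := by
    rw [ptConst, Subsingleton.elim includeRight (Algebra.ofId k (A ⊗[k] k))]
  rw [map_comp_eq_ptOp, hunit, AlgHom.comp_id, B.pt_add_comm, B.pt_zero_add]
  ext; simp

/-- The bialgebra of functions on the additive group of the ring scheme `Spec A`. -/
noncomputable abbrev addBialgebra : Bialgebra k A :=
  Bialgebra.ofAlgHom B.coadd B.counitAdd B.coadd_coassoc B.counitAdd_rTensor_comp_coadd
    B.counitAdd_lTensor_comp_coadd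

theorem isCocomm_addBialgebra :
    letI := B.addBialgebra
    Coalgebra.IsCocomm k A := by
  let := B.addBialgebra
  have hcomm : (Algebra.TensorProduct.comm k A A).toAlgHom.comp B.coadd = B.coadd := by
    calc _ = ptOp k A B.coadd includeRight includeLeft := by
          rw [comp_eq_ptOp]; rfl
      _ = (AlgHom.id k _).comp B.coadd := by rw [B.pt_add_comm, comp_eq_ptOp]; simp
      _ = B.coadd := AlgHom.id_comp _
  exact ⟨congrArg AlgHom.toLinearMap hcomm⟩

theorem pt_zero_mul {R : Type} [CommRing R] [Algebra k R] (f : A →ₐ[k] R) :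
    ptOp k A B.comul (ptConst k A B.counitAdd) f = ptConst k A B.counitAdd := by
  let z := ptOp k A B.comul f (ptConst k A B.counitAdd)
  have hz : ptOp k A B.coadd z z = z := by rw [← B.pt_mul_add, B.pt_zero_add]
  calc ptOp k A B.comul (ptConst k A B.counitAdd) f
      = ptOp k A B.coadd z (ptConst k A B.counitAdd) := by
        rw [B.pt_mul_comm, B.pt_add_comm, B.pt_zero_add]
    _ = ptOp k A B.coadd (ptOp k A B.coadd z z) (z.comp B.antipode) := by
        rw [B.pt_add_assoc, B.pt_add_neg]
    _ = ptConst k A B.counitAdd := by rw [hz, B.pt_add_neg]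

theorem map_id_coadd_comp_comul :
    (map (AlgHom.id k A) B.coadd).comp B.comul =
      (productMap ((map (AlgHom.id k A) includeLeft).comp B.comul)
        ((map (AlgHom.id k A) includeRight).comp B.comul)).comp B.coadd := by
  rw [map_id_comp_eq_ptOp_ptOp, B.pt_mul_add, ptOp_eq_productMap_comp, map_comp_eq_ptOp,
    map_comp_eq_ptOp, AlgHom.comp_id]

theorem contract_comul_mul'_map_coadd (φ ψ : A →ₗ[k] k) (a : A) :
    contract B.comul.toLinearMap
        (LinearMap.mul' k k ∘ₗ TensorProduct.map φ ψ ∘ₗ B.coadd.toLinearMap) a =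
      LinearMap.mul' k A (TensorProduct.map (contract B.comul.toLinearMap φ)
        (contract B.comul.toLinearMap ψ) (B.coadd a)) := by
  let Φ : A ⊗[k] (A ⊗[k] A) →ₗ[k] A :=
    TensorProduct.rid k A ∘ₗ (LinearMap.mul' k k ∘ₗ TensorProduct.map φ ψ).lTensor A
  let l := (map (AlgHom.id k A) (includeLeft : A →ₐ[k] A ⊗[k] A)).comp B.comul
  let r := (map (AlgHom.id k A) (includeRight : A →ₐ[k] A ⊗[k] A)).comp B.comul
  have hcomp : Φ ∘ₗ (productMap l r).toLinearMap =
      LinearMap.mul' k A ∘ₗ TensorProduct.map (contract B.comul.toLinearMap φ)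
        (contract B.comul.toLinearMap ψ) :=
    TensorProduct.ext' fun x y ↦ rid_lTensor_map_mul_map φ ψ (B.comul x) (B.comul y)
  calc _ = Φ ((map (AlgHom.id k A) B.coadd).comp B.comul a) := by
        change TensorProduct.rid k A (((LinearMap.mul' k k ∘ₗ TensorProduct.map φ ψ) ∘ₗ
          B.coadd.toLinearMap).lTensor A (B.comul a)) = _
        rw [LinearMap.lTensor_comp_apply]
        rfl
    _ = Φ (productMap l r (B.coadd a)) := by rw [B.map_id_coadd_comp_comul]; rfl
    _ = _ := LinearMap.congr_fun hcomp (B.coadd a)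

theorem isScaling_comul :
    letI := B.addBialgebra
    IsScaling B.comul.toLinearMap B.counitMul.toLinearMap := by
  let := B.addBialgebra
  refine ⟨fun φ ψ ↦ ?_, fun φ a ↦ ?_, fun φ a ↦ ?_⟩
  · ext a
    exact B.contract_comul_mul'_map_coadd φ.ofConv ψ.ofConv a
  · refine (apply_contract_eq_apply_ptOp B.comul B.counitAdd φ a).trans ?_
    rw [B.pt_zero_mul]
    change _ = B.counitAdd a * φ 1
    simp [ptConst, Algebra.ofId_apply, Algebra.algebraMap_eq_smul_one]
  · refine (apply_contract_eq_apply_ptOp B.comul B.counitMul φ a).trans ?_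
    rw [B.pt_one_mul, AlgHom.id_apply]

end Biring

theorem ker_map_mkQ_le_sideIdeal {k A : Type} [Field k] [CommRing A] [Algebra k A] (I : Ideal A) :
    LinearMap.ker (TensorProduct.map (I.restrictScalars k).mkQ (I.restrictScalars k).mkQ) ≤
      sideIdeal k A I := by
  have hexact := LinearMap.exact_subtype_mkQ (I.restrictScalars k)
  have hsurj := (I.restrictScalars k).mkQ_surjective
  rw [TensorProduct.map_ker hexact hsurj hexact hsurj, LinearMap.range_eq_map,
    LinearMap.range_eq_map, ← TensorProduct.span_tmul_eq_top, ← TensorProduct.span_tmul_eq_top]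
  refine sup_le ((Submodule.map_span_le _ _ _).2 ?_) ((Submodule.map_span_le _ _ _).2 ?_)
  · rintro _ ⟨a, i, rfl⟩
    exact Submodule.subset_span ⟨i, i.2, a, Or.inr rfl⟩
  · rintro _ ⟨i, a, rfl⟩
    exact Submodule.subset_span ⟨i, i.2, a, Or.inl rfl⟩

theorem connected_affine_ring_scheme_unipotent_general
    (k A : Type) [Field k] [CommRing A] [Algebra k A] (B : Biring k A)
    (hconn : ∀ e : A, e * e = e → e = 0 ∨ e = 1)
    (I : Submodule k A)
    (hIcounit : ∀ a ∈ I, B.counitAdd a = 0)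
    (hIne : I ≠ LinearMap.ker B.counitAdd.toLinearMap) :
    ∃ x : A, x ∉ I ∧
      TensorProduct.map I.mkQ I.mkQ
        (B.coadd x - x ⊗ₜ[k] (1 : A) - (1 : A) ⊗ₜ[k] x) = 0 := by
  let := B.addBialgebra
  have := B.isCocomm_addBialgebra
  exact (B.isScaling_comul.isConilpotent_one hconn).exists_map_mkQ_eq_zero .one
    (lt_of_le_of_ne hIcounit hIne)

/-- **Corollary 2.9**: any affine connected ring scheme over a field is unipotent:
for every Hopf ideal `I ≠ ker ε⁺` of a connected `k`-biring `A`, the quotient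
Hopf algebra `A/I` has a nonzero primitive element. -/
theorem connected_affine_ring_scheme_unipotent
    (k A : Type) [Field k] [CommRing A] [Algebra k A] (B : Biring k A)
    (hconn : ∀ e : A, e * e = e → e = 0 ∨ e = 1)
    (I : Ideal A)
    (hIcounit : ∀ a ∈ I, B.counitAdd a = 0)
    (hIantipode : ∀ a ∈ I, B.antipode a ∈ I)
    (hIcoadd : ∀ a ∈ I, B.coadd a ∈ sideIdeal k A I)
    (hIne : I ≠ RingHom.ker B.counitAdd) :
    ∃ x : A, x ∉ I ∧
      B.coadd x - x ⊗ₜ[k] (1 : A) - (1 : A) ⊗ₜ[k] x ∈ sideIdeal k A I := by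
  obtain ⟨x, hxI, hx⟩ := connected_affine_ring_scheme_unipotent_general k A B hconn
    (I.restrictScalars k) hIcounit fun h ↦ hIne <| SetLike.ext fun a ↦ SetLike.ext_iff.1 h a
  exact ⟨x, hxI, ker_map_mkQ_le_sideIdeal I hx⟩
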